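/- arXiv:1706.07184 — 2 statements merged into one kernel-verified Lean document; each statement's English description precedes it below -/
import Mathlib

section
/- Let μ be a Borel probability measure on SL₂(ℝ) with a finite exponential moment whose support generates a Zariski dense subgroup, and let ν be the unique μ-stationary measure on X = ℙ(ℝ²). Then for every real t > 0 and every continuous function f on X, both series below converge and ∫_X f(x) dν(x) = ∫_X [ Σ_{n≥1} ∫_{G^n} ( 1{κ(g₁⋯g_{n−1}) < t ≤ κ(g₁⋯g_n)} − 1{κ(g₁⋯g_{n−1}) ≥ t > κ(g₁⋯g_n)} ) f(g₁⋯g_n x) dμ(g₁)⋯dμ(g_n) ] dν(x), where the empty product (n−1 = 0) is the identity matrix, whose Cartan projection is 0. -/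
open MeasureTheory Filter

noncomputable section

abbrev SL2 := Matrix.SpecialLinearGroup (Fin 2) ℝ

abbrev PX := Projectivization ℝ (Fin 2 → ℝ)

instance : TopologicalSpace SL2 := instTopologicalSpaceSubtype
instance : TopologicalSpace PX := instTopologicalSpaceQuotient
instance : MeasurableSpace SL2 := borel _
instance : MeasurableSpace PX := borel _

/-- Euclidean norm on ℝ². -/
def enorm2 (v : Fin 2 → ℝ) : ℝ := Real.sqrt (v 0 ^ 2 + v 1 ^ 2)

/-- Operator norm of g ∈ SL₂(ℝ) w.r.t. the Euclidean norm on ℝ². -/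
def opNorm (g : SL2) : ℝ :=
  ‖Matrix.toEuclideanCLM (𝕜 := ℝ) (n := Fin 2) (g : Matrix (Fin 2) (Fin 2) ℝ)‖

/-- Cartan projection κ(g) = log ‖g‖. -/
def kappa (g : SL2) : ℝ := Real.log (opNorm g)

/-- The projective action of SL₂(ℝ) on ℙ(ℝ²). -/
def act (g : SL2) (x : PX) : PX :=
  Projectivization.map ((Matrix.SpecialLinearGroup.toLin' g).toLinearMap)
    (LinearEquiv.injective _) x

/-- The norm cocycle σ(g, ℝv) = log (‖gv‖/‖v‖). -/
def cocycle (g : SL2) (x : PX) : ℝ :=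
  Real.log (enorm2 ((g : Matrix (Fin 2) (Fin 2) ℝ).mulVec x.rep) / enorm2 x.rep)

/-- The sine distance d(ℝv, ℝw) = |det(v,w)|/(‖v‖‖w‖) on ℙ(ℝ²). -/
def projDist (x y : PX) : ℝ :=
  |x.rep 0 * y.rep 1 - x.rep 1 * y.rep 0| / (enorm2 x.rep * enorm2 y.rep)

/-- An angle θ(x) ∈ ℝ representing x = ℝ(cos θ, sin θ). -/
def pangle (x : PX) : ℝ := Complex.arg (x.rep 0 + x.rep 1 * Complex.I)

/-- The (topological) support of a measure. -/
def measSupp (μ : Measure SL2) : Set SL2 :=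
  {g | ∀ U : Set SL2, IsOpen U → g ∈ U → 0 < μ U}

/-- μ has a finite exponential moment. -/
def HasExpMoment (μ : Measure SL2) : Prop :=
  ∃ ε₁ > (0 : ℝ), ∫⁻ g, ENNReal.ofReal (opNorm g ^ ε₁) ∂μ < ⊤

/-- The group generated by the support of μ is Zariski dense in SL₂(ℝ),
equivalently it is not solvable. -/
def ZariskiDense (μ : Measure SL2) : Prop :=
  ¬ IsSolvable (Subgroup.closure (measSupp μ))

/-- ν is μ-stationary: μ ∗ ν = ν. -/
def IsMuStationary (μ : Measure SL2) (ν : Measure PX) : Prop :=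
  μ.bind (fun g => ν.map (act g)) = ν

/-- The product g₁ ⋯ gₙ of a word (g₁, …, gₙ). -/
def word {n : ℕ} (g : Fin n → SL2) : SL2 := (List.ofFn g).prod

/-- The product measure μ^{⊗n} on words of length n. -/
def μpi (μ : Measure SL2) (n : ℕ) : Measure (Fin n → SL2) := Measure.pi fun _ => μ

instance : BorelSpace SL2 := ⟨rfl⟩
instance : BorelSpace PX := ⟨rfl⟩
theorem sl2_closedEmb : Topology.IsClosedEmbedding (fun g : SL2 => (g : Matrix (Fin 2) (Fin 2) ℝ)) :=
  Matrix.SpecialLinearGroup.isClosedEmbedding_val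
instance : SecondCountableTopology (Matrix (Fin 2) (Fin 2) ℝ) :=
  inferInstanceAs (SecondCountableTopology (Fin 2 → Fin 2 → ℝ))
instance : TopologicalSpace.MetrizableSpace (Matrix (Fin 2) (Fin 2) ℝ) :=
  inferInstanceAs (TopologicalSpace.MetrizableSpace (Fin 2 → Fin 2 → ℝ))
instance : SecondCountableTopology SL2 := sl2_closedEmb.isEmbedding.secondCountableTopology
instance : TopologicalSpace.MetrizableSpace SL2 := sl2_closedEmb.isEmbedding.metrizableSpace
instance : IsTopologicalGroup SL2 := Matrix.SpecialLinearGroup.topologicalGroup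

theorem continuous_coe_sl2 : Continuous (fun g : SL2 => (g : Matrix (Fin 2) (Fin 2) ℝ)) :=
  sl2_closedEmb.continuous

theorem continuous_entry (i j : Fin 2) : Continuous (fun g : SL2 => (g : Matrix (Fin 2) (Fin 2) ℝ) i j) := by
  have := continuous_coe_sl2
  exact (continuous_apply j).comp ((continuous_apply i).comp this)

/-- projection from nonzero vectors -/
def pr (v : {v : Fin 2 → ℝ // v ≠ 0}) : PX := Projectivization.mk' ℝ v

theorem pr_quot : Topology.IsQuotientMap pr := isQuotientMap_quotient_mk'

theorem mulVec_ne (g : SL2) {v : Fin 2 → ℝ} (hv : v ≠ 0) :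
    (g : Matrix (Fin 2) (Fin 2) ℝ).mulVec v ≠ 0 := by
  intro h
  apply hv
  have := congrArg (fun w => ((g⁻¹ : SL2) : Matrix (Fin 2) (Fin 2) ℝ).mulVec w) h
  simpa only [Matrix.mulVec_mulVec, ← Matrix.SpecialLinearGroup.coe_mul, inv_mul_cancel,
    Matrix.SpecialLinearGroup.coe_one, Matrix.one_mulVec, Matrix.mulVec_zero] using this

theorem act_pr (g : SL2) (v : {v : Fin 2 → ℝ // v ≠ 0}) :
    act g (pr v) = pr ⟨(g : Matrix (Fin 2) (Fin 2) ℝ).mulVec v.1, mulVec_ne g v.2⟩ := rfl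

theorem pr_surj (x : PX) : ∃ v, pr v = x := pr_quot.surjective x

theorem act_mul (g h : SL2) (x : PX) : act (g * h) x = act g (act h x) := by
  obtain ⟨v, rfl⟩ := pr_surj x
  simp only [act_pr]
  congr 1
  ext1
  simp only [Matrix.mulVec_mulVec, Matrix.SpecialLinearGroup.coe_mul]

theorem act_one (x : PX) : act 1 x = x := by
  obtain ⟨v, rfl⟩ := pr_surj x
  rw [act_pr]
  congr 1
  ext1
  simp

theorem continuous_mulVec (v : Fin 2 → ℝ) :
    Continuous (fun g : SL2 => (g : Matrix (Fin 2) (Fin 2) ℝ).mulVec v) :=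
  continuous_coe_sl2.matrix_mulVec continuous_const

theorem continuous_act_left (x : PX) : Continuous (fun g => act g x) := by
  obtain ⟨v, rfl⟩ := pr_surj x
  simp only [act_pr]
  exact pr_quot.continuous.comp ((continuous_mulVec v.1).subtype_mk _)

theorem continuous_act_right (g : SL2) : Continuous (act g) := by
  rw [pr_quot.continuous_iff]
  have : act g ∘ pr = fun v => pr ⟨(g : Matrix (Fin 2) (Fin 2) ℝ).mulVec v.1, mulVec_ne g v.2⟩ := rfl
  rw [this]
  refine pr_quot.continuous.comp (Continuous.subtype_mk ?_ _)
  exact (continuous_const (y := (g : Matrix (Fin 2) (Fin 2) ℝ))).matrix_mulVec continuous_subtype_val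

theorem pr_eq_iff (v w : {v : Fin 2 → ℝ // v ≠ 0}) :
    pr v = pr w ↔ v.1 0 * w.1 1 - v.1 1 * w.1 0 = 0 := by
  obtain ⟨v, hv⟩ := v
  obtain ⟨w, hw⟩ := w
  have : pr ⟨v, hv⟩ = pr ⟨w, hw⟩ ↔ ∃ a : ℝ, a • w = v := Projectivization.mk_eq_mk_iff' ℝ v w hv hw
  rw [this]
  constructor
  · rintro ⟨a, rfl⟩
    simp; ring
  · intro h
    simp only at h
    by_cases h0 : w 0 = 0
    · have h1 : w 1 ≠ 0 := by
        intro h1; apply hw; ext i; fin_cases i <;> simp [h0, h1]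
      refine ⟨v 1 / w 1, ?_⟩
      have : v 0 = 0 := by simpa [h0, h1] using h
      ext i; fin_cases i <;> simp [h0, h1, this]
    · refine ⟨v 0 / w 0, ?_⟩
      ext i; fin_cases i
      · simp [h0]
      · simp; field_simp; linarith

instance : CompactSpace PX := by
  have hc : IsCompact (Metric.sphere (0 : Fin 2 → ℝ) 1) := isCompact_sphere 0 1
  have hne : ∀ v : Metric.sphere (0 : Fin 2 → ℝ) 1, v.1 ≠ 0 := fun v h => by
    have := v.2; simp [h] at this
  let φ : Metric.sphere (0 : Fin 2 → ℝ) 1 → PX := fun v => pr ⟨v.1, hne v⟩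
  have hφ : Continuous φ := pr_quot.continuous.comp (continuous_subtype_val.subtype_mk _)
  have := isCompact_iff_compactSpace.mp hc
  have hs : Function.Surjective φ := by
    intro x
    obtain ⟨v, rfl⟩ := pr_surj x
    have hv : ‖v.1‖ ≠ 0 := norm_ne_zero_iff.mpr v.2
    refine ⟨⟨‖v.1‖⁻¹ • v.1, by simp [norm_smul, hv]⟩, ?_⟩
    rw [pr_eq_iff]
    simp; ring
  exact hs.compactSpace hφ

theorem exists_bound (f : PX → ℝ) (hf : Continuous f) : ∃ C, 0 ≤ C ∧ ∀ x, |f x| ≤ C := by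
  obtain ⟨C, hC⟩ := isCompact_univ.exists_bound_of_continuousOn hf.continuousOn
  obtain ⟨v, -⟩ := (inferInstance : Nonempty PX)
  exact ⟨max C 0, le_max_right _ _, fun x => (hC x trivial).trans (le_max_left _ _)⟩

theorem measurable_uncurry_act (f : PX → ℝ) (hf : Continuous f) :
    Measurable (fun p : SL2 × PX => f (act p.1 p.2)) := by
  have := stronglyMeasurable_uncurry_of_continuous_of_stronglyMeasurable
    (u := fun (g : SL2) (x : PX) => f (act g x))
    (fun x => hf.comp (continuous_act_left x)) (fun g =>
      (hf.comp (continuous_act_right g)).measurable.stronglyMeasurable)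
  exact this.measurable

theorem integrable_of_bdd {α : Type*} [MeasurableSpace α] {m : Measure α} [IsFiniteMeasure m]
    {f : α → ℝ} (hf : Measurable f) {C : ℝ} (hC : ∀ x, |f x| ≤ C) : Integrable f m :=
  Integrable.of_bound hf.aestronglyMeasurable C (Eventually.of_forall hC)

theorem abs_integral_le {α : Type*} [MeasurableSpace α] {m : Measure α} [IsProbabilityMeasure m]
    {f : α → ℝ} {C : ℝ} (hC : ∀ x, |f x| ≤ C) : |∫ x, f x ∂m| ≤ C := by
  have := norm_integral_le_of_norm_le_const (μ := m) (f := f) (C := C) (Eventually.of_forall hC)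
  simpa using this

/-- the harmonic function -/
def Fh (ν : Measure PX) (f : PX → ℝ) (s : SL2) : ℝ := ∫ x, f (act s x) ∂ν

theorem Fh_bdd (ν : Measure PX) [IsProbabilityMeasure ν] {f : PX → ℝ} {C : ℝ}
    (hC : ∀ x, |f x| ≤ C) (s : SL2) : |Fh ν f s| ≤ C :=
  abs_integral_le fun _ => hC _

theorem Fh_cont (ν : Measure PX) [IsProbabilityMeasure ν] {f : PX → ℝ} (hf : Continuous f) :
    Continuous (Fh ν f) := by
  obtain ⟨C, -, hC⟩ := exists_bound f hf
  refine continuous_of_dominated (bound := fun _ => C) ?_ ?_ (integrable_const C) ?_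
  · exact fun g => (hf.comp (continuous_act_right g)).measurable.aestronglyMeasurable
  · exact fun g => Eventually.of_forall fun x => hC _
  · exact Eventually.of_forall fun x => hf.comp (continuous_act_left x)

theorem stat_int (μ : Measure SL2) [IsProbabilityMeasure μ] (ν : Measure PX)
    [IsProbabilityMeasure ν] (hstat : IsMuStationary μ ν) {h : PX → ℝ} (hh : Continuous h) :
    ∫ g, Fh ν h g ∂μ = ∫ x, h x ∂ν := by
  obtain ⟨C, hC0, hC⟩ := exists_bound h hh
  have hae : AEMeasurable (fun g => ν.map (act g)) μ := by
    by_contra hn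
    have h0 : μ.bind (fun g => ν.map (act g)) = 0 := by
      rw [Measure.bind, Measure.map_of_not_aemeasurable hn, Measure.join_zero]
    rw [IsMuStationary, h0] at hstat
    exact IsProbabilityMeasure.ne_zero ν hstat.symm
  have key : ∀ k : PX → ℝ, Continuous k → (∀ x, 0 ≤ k x) →
      ∫ g, Fh ν k g ∂μ = ∫ x, k x ∂ν := by
    intro k hk hk0
    obtain ⟨D, -, hD⟩ := exists_bound k hk
    have hF0 : ∀ g, 0 ≤ Fh ν k g := fun g => integral_nonneg fun x => hk0 _
    rw [integral_eq_lintegral_of_nonneg_ae (Eventually.of_forall hF0)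
      (Fh_cont ν hk).measurable.aestronglyMeasurable,
      integral_eq_lintegral_of_nonneg_ae (Eventually.of_forall hk0)
      hk.measurable.aestronglyMeasurable]
    congr 1
    conv_rhs => rw [← hstat]
    rw [Measure.lintegral_bind hae hk.measurable.ennreal_ofReal.aemeasurable]
    refine lintegral_congr fun g => ?_
    rw [lintegral_map hk.measurable.ennreal_ofReal (continuous_act_right g).measurable, Fh,
      ofReal_integral_eq_lintegral_ofReal]
    · exact integrable_of_bdd (hk.comp (continuous_act_right g)).measurable (fun x => hD _)
    · exact Eventually.of_forall fun x => hk0 _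
  have h1 := key (fun x => h x + C) (hh.add continuous_const)
    (fun x => by have := neg_le_of_abs_le (hC x); linarith)
  have h2 : ∀ g, Fh ν (fun x => h x + C) g = Fh ν h g + C := fun g => by
    have hi : Integrable (fun x => h (act g x)) ν :=
      integrable_of_bdd (hh.comp (continuous_act_right g)).measurable (fun x => hC _)
    change ∫ x, (h (act g x) + C) ∂ν = ∫ x, h (act g x) ∂ν + C
    rw [integral_add hi (integrable_const _)]
    simp
  simp only [h2] at h1
  rw [integral_add (integrable_of_bdd (Fh_cont ν hh).measurable (Fh_bdd ν hC))
    (integrable_const _), integral_add (integrable_of_bdd hh.measurable hC)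
    (integrable_const _)] at h1
  simpa using h1

theorem Fh_comp (ν : Measure PX) (f : PX → ℝ) (s g : SL2) :
    Fh ν (fun x => f (act s x)) g = Fh ν f (s * g) := by
  simp only [Fh, act_mul]

theorem Fh_harm (μ : Measure SL2) [IsProbabilityMeasure μ] (ν : Measure PX)
    [IsProbabilityMeasure ν] (hstat : IsMuStationary μ ν) {f : PX → ℝ} (hf : Continuous f)
    (s : SL2) : ∫ g, Fh ν f (s * g) ∂μ = Fh ν f s := by
  have := stat_int μ ν hstat (hf.comp (continuous_act_right s))
  simp only [Function.comp_def, Fh_comp] at this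
  exact this

/-- law of the random product -/
def law (μ : Measure SL2) (n : ℕ) : Measure SL2 := (μpi μ n).map word

theorem word_snoc {n : ℕ} (g : Fin (n + 1) → SL2) :
    word g = word (g ∘ Fin.castSucc) * g (Fin.last n) := by
  unfold word
  rw [List.ofFn_succ', List.concat_eq_append, List.prod_append]
  simp [Function.comp_def]

theorem measurable_word (n : ℕ) : Measurable (word : (Fin n → SL2) → SL2) := by
  induction n with
  | zero => 
    have : (word : (Fin 0 → SL2) → SL2) = fun _ => 1 := by ext1 g; simp [word]
    rw [this]; exact measurable_const
  | succ n ih =>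
    have : (word : (Fin (n+1) → SL2) → SL2) =
      fun g => word (g ∘ Fin.castSucc) * g (Fin.last n) := by ext1 g; exact word_snoc g
    rw [this]
    refine Measurable.mul (ih.comp ?_) (measurable_pi_apply _)
    exact measurable_pi_lambda _ fun i => measurable_pi_apply _

instance (μ : Measure SL2) [IsProbabilityMeasure μ] (n : ℕ) : IsProbabilityMeasure (μpi μ n) := by
  unfold μpi; infer_instance

instance (μ : Measure SL2) [IsProbabilityMeasure μ] (n : ℕ) : IsProbabilityMeasure (law μ n) :=
  Measure.isProbabilityMeasure_map (measurable_word n).aemeasurable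

theorem law_zero (μ : Measure SL2) [IsProbabilityMeasure μ] : law μ 0 = Measure.dirac 1 := by
  have : (word : (Fin 0 → SL2) → SL2) = fun _ => 1 := by ext1 g; simp [word]
  unfold law
  rw [this, Measure.map_const]
  simp

theorem joint_mp (μ : Measure SL2) [IsProbabilityMeasure μ] (n : ℕ) :
    MeasurePreserving (fun g : Fin (n+1) → SL2 => (word (g ∘ Fin.castSucc), g (Fin.last n)))
      (μpi μ (n+1)) ((law μ n).prod μ) := by
  have h1 := measurePreserving_piFinSuccAbove (fun _ : Fin (n+1) => μ) (Fin.last n)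
  have h2 : MeasurePreserving (Prod.map id (word : (Fin n → SL2) → SL2))
      (μ.prod (μpi μ n)) (μ.prod (law μ n)) :=
    (MeasurePreserving.id μ).prod ⟨measurable_word n, rfl⟩
  have h3 := (Measure.measurePreserving_swap (μ := μ) (ν := law μ n)).comp (h2.comp h1)
  have he : (fun g : Fin (n+1) → SL2 => (word (g ∘ Fin.castSucc), g (Fin.last n))) =
      (Prod.swap ∘ Prod.map id word ∘
        ⇑(MeasurableEquiv.piFinSuccAbove (fun x => SL2) (Fin.last n))) := by
    ext1 g
    simp [MeasurableEquiv.piFinSuccAbove, Fin.insertNthEquiv]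
    rfl
  rw [he]
  exact h3

theorem integral_joint (μ : Measure SL2) [IsProbabilityMeasure μ] (n : ℕ)
    {Φ : SL2 × SL2 → ℝ} (hΦ : Measurable Φ) {C : ℝ} (hC : ∀ p, |Φ p| ≤ C) :
    ∫ g, Φ (word (g ∘ Fin.castSucc), word g) ∂(μpi μ (n+1)) =
      ∫ s, ∫ h, Φ (s, s * h) ∂μ ∂(law μ n) := by
  have hm : Measurable (fun p : SL2 × SL2 => Φ (p.1, p.1 * p.2)) :=
    hΦ.comp (measurable_fst.prodMk (measurable_fst.mul measurable_snd))
  rw [← integral_prod (fun p : SL2 × SL2 => Φ (p.1, p.1 * p.2)) (integrable_of_bdd hm fun p => hC _),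
    ← (joint_mp μ n).map_eq, integral_map (joint_mp μ n).measurable.aemeasurable
      hm.aestronglyMeasurable]
  simp only [word_snoc]

theorem integral_law_succ (μ : Measure SL2) [IsProbabilityMeasure μ] (n : ℕ)
    {Φ : SL2 → ℝ} (hΦ : Measurable Φ) {C : ℝ} (hC : ∀ p, |Φ p| ≤ C) :
    ∫ s, Φ s ∂(law μ (n+1)) = ∫ s, ∫ h, Φ (s * h) ∂μ ∂(law μ n) := by
  rw [law, integral_map (measurable_word _).aemeasurable hΦ.aestronglyMeasurable]
  exact integral_joint μ n (Φ := fun p => Φ p.2) (hΦ.comp measurable_snd) (fun p => hC _)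

/-- the variance function -/
def Dh (μ : Measure SL2) (ν : Measure PX) (f : PX → ℝ) (s : SL2) : ℝ :=
  ∫ g, (Fh ν f (s * g) - Fh ν f s) ^ 2 ∂μ

section
variable (μ : Measure SL2) [IsProbabilityMeasure μ] (ν : Measure PX)
    [IsProbabilityMeasure ν]

theorem Dh_cont {f : PX → ℝ} (hf : Continuous f) : Continuous (Dh μ ν f) := by
  obtain ⟨C, hC0, hC⟩ := exists_bound f hf
  have hF := Fh_cont ν hf
  refine continuous_of_dominated (bound := fun _ => (C + C) ^ 2) ?_ ?_ (integrable_const _) ?_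
  · intro s
    exact (((hF.comp (continuous_const_mul s)).sub continuous_const).pow 2).measurable.aestronglyMeasurable
  · refine fun s => Eventually.of_forall fun g => ?_
    rw [Real.norm_eq_abs, abs_pow]
    gcongr
    exact (abs_sub _ _).trans (add_le_add (Fh_bdd ν hC _) (Fh_bdd ν hC _))
  · exact Eventually.of_forall fun g => ((hF.comp (continuous_mul_const g)).sub hF).pow 2

theorem Dh_eq (hstat : IsMuStationary μ ν) {f : PX → ℝ} (hf : Continuous f) (s : SL2) :
    Dh μ ν f s = ∫ g, Fh ν f (s * g) ^ 2 ∂μ - Fh ν f s ^ 2 := by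
  obtain ⟨C, hC0, hC⟩ := exists_bound f hf
  have hF := Fh_cont ν hf
  have hm : Continuous (fun g => Fh ν f (s * g)) := hF.comp (continuous_const_mul s)
  have i1 : Integrable (fun g => Fh ν f (s * g)) μ := 
    integrable_of_bdd hm.measurable fun g => Fh_bdd ν hC _
  have i2 : Integrable (fun g => Fh ν f (s * g) ^ 2) μ := 
    integrable_of_bdd (C := C ^ 2) (hm.pow 2).measurable fun g => by
      rw [abs_pow]; gcongr; exact Fh_bdd ν hC _
  have : ∀ g, (Fh ν f (s * g) - Fh ν f s) ^ 2 =
    Fh ν f (s * g) ^ 2 - (2 * Fh ν f s) * Fh ν f (s * g) + Fh ν f s ^ 2 := fun g => by ring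
  unfold Dh
  simp only [this]
  have i3 : Integrable (fun g => Fh ν f (s * g) ^ 2 - 2 * Fh ν f s * Fh ν f (s * g)) μ :=
    i2.sub (i1.const_mul _)
  rw [integral_add i3 (integrable_const _), integral_sub i2 (i1.const_mul _), integral_const_mul, Fh_harm μ ν hstat hf]
  simp; ring

theorem Dh_nonneg (f : PX → ℝ) (s : SL2) : 0 ≤ Dh μ ν f s := integral_nonneg fun g => sq_nonneg _

theorem Dh_bdd {f : PX → ℝ} {C : ℝ} (hC : ∀ x, |f x| ≤ C) (s : SL2) :
    |Dh μ ν f s| ≤ (C + C) ^ 2 := by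
  refine abs_integral_le fun g => ?_
  rw [abs_pow]
  gcongr
  exact (abs_sub _ _).trans (add_le_add (Fh_bdd ν hC _) (Fh_bdd ν hC _))

theorem Dh_sum (hstat : IsMuStationary μ ν) {f : PX → ℝ} (hf : Continuous f) :
    Summable (fun n => ∫ s, Dh μ ν f s ∂(law μ n)) := by
  obtain ⟨C, hC0, hC⟩ := exists_bound f hf
  have hF := Fh_cont ν hf
  have hb : ∀ s, |Fh ν f s ^ 2| ≤ C ^ 2 := fun s => by
    rw [abs_pow]; gcongr; exact Fh_bdd ν hC _
  have hb' : ∀ s, |∫ g, Fh ν f (s * g) ^ 2 ∂μ| ≤ C ^ 2 := fun s => 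
    abs_integral_le fun g => hb _
  have hc' : Continuous (fun s => ∫ g, Fh ν f (s * g) ^ 2 ∂μ) := by
    have : (fun s => ∫ g, Fh ν f (s * g) ^ 2 ∂μ) = fun s => Dh μ ν f s + Fh ν f s ^ 2 := by
      ext s; rw [Dh_eq μ ν hstat hf]; ring
    rw [this]
    exact (Dh_cont μ ν hf).add (hF.pow 2)
  have hF2 : Measurable (fun s => Fh ν f s ^ 2) := (hF.pow 2).measurable
  have step : ∀ n, ∫ s, Dh μ ν f s ∂(law μ n) =
      ∫ s, Fh ν f s ^ 2 ∂(law μ (n+1)) - ∫ s, Fh ν f s ^ 2 ∂(law μ n) := by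
    intro n
    rw [integral_law_succ μ n hF2 hb, ← integral_sub
      (integrable_of_bdd hc'.measurable hb') (integrable_of_bdd hF2 hb)]
    exact integral_congr_ae (Eventually.of_forall fun s => Dh_eq μ ν hstat hf s)
  refine summable_of_sum_range_le (c := C ^ 2) (fun n => integral_nonneg (Dh_nonneg μ ν f)) ?_
  intro n
  simp only [step]
  rw [Finset.sum_range_sub (fun n => ∫ s, Fh ν f s ^ 2 ∂(law μ n))]
  have h1 := (abs_le.mp (abs_integral_le (m := law μ n) hb)).2
  have h2 : 0 ≤ ∫ s, Fh ν f s ^ 2 ∂(law μ 0) := integral_nonneg fun s => sq_nonneg _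
  linarith

theorem transient (hstat : IsMuStationary μ ν)
    (hni : ∀ s, ∃ f : PX → ℝ, Continuous f ∧ Dh μ ν f s ≠ 0) {K : Set SL2} (hK : IsCompact K) :
    Summable (fun n => (law μ n).real K) := by
  refine hK.induction_on (p := fun K => Summable (fun n => (law μ n).real K)) ?_ ?_ ?_ ?_
  · simp
  · intro s t hst ht
    exact Summable.of_nonneg_of_le (fun n => measureReal_nonneg) (fun n => measureReal_mono hst) ht
  · intro s t hs ht
    exact Summable.of_nonneg_of_le (fun n => measureReal_nonneg)
      (fun n => measureReal_union_le s t) (hs.add ht)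
  · intro s _
    obtain ⟨f, hf, hD⟩ := hni s
    obtain ⟨C, hC0, hC⟩ := exists_bound f hf
    have hpos : 0 < Dh μ ν f s := lt_of_le_of_ne (Dh_nonneg μ ν f s) (Ne.symm hD)
    set c := Dh μ ν f s / 2 with hc
    have hc0 : 0 < c := by positivity
    refine ⟨{s | c ≤ Dh μ ν f s}, ?_, ?_⟩
    · apply mem_nhdsWithin_of_mem_nhds
      filter_upwards [(Dh_cont μ ν hf).continuousAt.eventually (lt_mem_nhds (half_lt_self hpos))]
        with x hx using hx.le
    · refine Summable.of_nonneg_of_le (fun n => measureReal_nonneg) (fun n => ?_)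
        ((Dh_sum μ ν hstat hf).mul_left c⁻¹)
      have := mul_meas_ge_le_integral_of_nonneg (μ := law μ n) (Eventually.of_forall (Dh_nonneg μ ν f))
        (integrable_of_bdd (Dh_cont μ ν hf).measurable (Dh_bdd μ ν hC)) c
      rw [inv_mul_eq_div, le_div_iff₀ hc0, mul_comm]
      exact this
end

/-! ### Bounded subgroups are commutative -/

theorem real_elliptic (k b c k' b' c' δ : ℝ) (hδ : 0 < δ) (h1 : -k^2 - b*c = δ)
    (h2 : -k'^2 - b'*c' = δ) (hb : 0 < b * b') (h3 : -(2*k*k' + b*c' + c*b') ≤ 2 * δ) :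
    k = k' ∧ b = b' ∧ c = c' := by
  have hb0 : b ≠ 0 := left_ne_zero_of_mul hb.ne'
  have e1 : b * c = -(k^2+δ) := by linarith
  have e2 : b' * c' = -(k'^2+δ) := by linarith
  have key : (b*k'-b'*k)^2 + δ*(b-b')^2 ≤ 0 := by
    have : (b*k'-b'*k)^2 + δ*(b-b')^2 = (b*b') * (-(2*k*k' + b*c' + c*b') - 2*δ) := by
      have : (b*b') * (-(2*k*k' + b*c' + c*b') - 2*δ) =
        -2*k*k'*b*b' - b^2*(b'*c') - b'^2*(b*c) - 2*δ*(b*b') := by ring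
      rw [this, e1, e2]; ring
    rw [this]
    exact mul_nonpos_of_nonneg_of_nonpos hb.le (by linarith)
  have hbb : b = b' := by
    have h5 : δ*(b-b')^2 ≤ 0 := by nlinarith [sq_nonneg (b*k'-b'*k)]
    have h6 : (b-b')^2 = 0 := le_antisymm (by nlinarith) (sq_nonneg _)
    have := pow_eq_zero_iff (two_ne_zero) |>.mp h6
    linarith
  subst hbb
  have hk : k = k' := by
    have h6 : (b*k'-b*k)^2 = 0 := le_antisymm (by nlinarith) (sq_nonneg _)
    have := pow_eq_zero_iff (two_ne_zero) |>.mp h6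
    have h7 : b * (k' - k) = 0 := by linarith
    rcases mul_eq_zero.mp h7 with h | h
    · exact absurd h hb0
    · linarith
  subst hk
  refine ⟨rfl, rfl, ?_⟩
  exact mul_left_cancel₀ hb0 (by linarith)

theorem real_comm (a b c d p q r s : ℝ) (hA : a*d-b*c=1) (hB : p*s-q*r=1)
    (ht : (a+d)^2 < 4)
    (htr : (a*p+b*r)*(d*s+b*r) + (a*q+b*s)*(-c*s-a*r) + (c*p+d*r)*(-d*q-b*p) + (c*q+d*s)*(c*q+a*p) ≤ 2) :
    a*p+b*r = p*a+q*c ∧ a*q+b*s = p*b+q*d ∧ c*p+d*r = r*a+s*c ∧ c*q+d*s = r*b+s*d := by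
  set k := (a-d)/2 with hk
  have hδ : 0 < -k^2 - b*c := by rw [hk]; nlinarith
  have hK := real_elliptic k b c ((p*k+q*c)*s - (p*b-q*k)*r) (p^2*b-2*p*q*k-q^2*c)
    ((r*k+s*c)*s - (r*b-s*k)*r) (-k^2-b*c) hδ rfl ?_ ?_ ?_
  · obtain ⟨e1, e2, e3⟩ := hK
    have ha : a = (a+d)/2 + k := by rw [hk]; ring
    have hd : d = (a+d)/2 - k := by rw [hk]; ring
    have f1 : k*p+b*r = p*k+q*c := by
      linear_combination p * e1 + r * e2 + (p*k+q*c) * hB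
    have f2 : k*q+b*s = p*b-q*k := by
      linear_combination q * e1 + s * e2 + (p*b-q*k)*hB
    have f3 : c*p-k*r = r*k+s*c := by
      linear_combination p * e3 - r * e1 + (r*k+s*c) * hB
    have f4 : c*q-k*s = r*b-s*k := by
      linear_combination q * e3 - s * e1 + (r*b-s*k) * hB
    refine ⟨?_, ?_, ?_, ?_⟩
    · linear_combination f1
    · rw [hk] at f2; linear_combination f2
    · rw [hk] at f3; linear_combination f3
    · linear_combination f4
  · have : ∀ x : ℝ, x = x * (p*s-q*r)^2 := fun x => by rw [hB]; ring
    rw [this (-k^2-b*c)]; ring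
  · have : b * (p^2*b-2*p*q*k-q^2*c) = (p*b-q*k)^2 + q^2*(-k^2-b*c) := by ring
    rw [this]
    by_cases hq : q = 0
    · subst hq
      have hp : p ≠ 0 := by rintro rfl; simp at hB
      have hb : b ≠ 0 := by rintro rfl; nlinarith [sq_nonneg k]
      have : 0 < (p*b)^2 := by positivity
      simpa using this
    · positivity
  · have h1 : -(2*k*((p*k+q*c)*s - (p*b-q*k)*r) + b*((r*k+s*c)*s - (r*b-s*k)*r) + c*(p^2*b-2*p*q*k-q^2*c))
        = (a*p+b*r)*(d*s+b*r) + (a*q+b*s)*(-c*s-a*r) + (c*p+d*r)*(-d*q-b*p) + (c*q+d*s)*(c*q+a*p) - 2*((a+d)/2)^2*(p*s-q*r) := by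
      rw [hk]; ring
    rw [h1, hB]
    have h2 : 2 * (-k^2-b*c) = 2*(a*d-b*c) - 2*((a+d)/2)^2 := by rw [hk]; ring
    rw [h2, hA]
    linarith

theorem tr_sq (g : SL2) : (g^2).1.trace = g.1.trace ^ 2 - 2 := by
  have := g.2
  rw [Matrix.det_fin_two] at this
  simp only [sq, Matrix.SpecialLinearGroup.coe_mul, Matrix.trace_fin_two, Matrix.mul_apply, Fin.sum_univ_two]
  linear_combination (-2) * this

section
variable (Γ : Subgroup SL2) (C : ℝ) (hC : ∀ g ∈ Γ, ∀ i j, |g.1 i j| ≤ C)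
include hC

theorem bdd_tr (g : SL2) (hg : g ∈ Γ) : |g.1.trace| ≤ 2 := by
  by_contra! h
  have key : ∀ n : ℕ, 4 ^ n * (|g.1.trace| - 2) ≤ |(g^(2^n)).1.trace| - 2 := by
    intro n
    induction n with
    | zero => simp
    | succ n ih =>
      rw [pow_succ 2 n, pow_mul, tr_sq]
      set t := (g^(2^n)).1.trace
      have : t^2 - 2 ≤ |t^2-2| := le_abs_self _
      have h3 : t^2 = |t|^2 := (sq_abs t).symm
      have h4 : 0 ≤ |t| - 2 := le_trans (by have := sub_pos.mpr h; positivity) ih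
      rw [pow_succ]
      nlinarith
  have h4 : Tendsto (fun n : ℕ => (4:ℝ) ^ n * (|g.1.trace| - 2)) atTop atTop :=
    (tendsto_pow_atTop_atTop_of_one_lt (by norm_num)).atTop_mul_const (by linarith)
  obtain ⟨n, hn⟩ := (h4.eventually_gt_atTop (2 * C)).exists
  have h5 := hC _ (Γ.pow_mem hg (2^n)) 0 0
  have h6 := hC _ (Γ.pow_mem hg (2^n)) 1 1
  have h7 := key n
  rw [Matrix.trace_fin_two (g^(2^n)).1] at h7
  have h8 := abs_add_le ((g^(2^n)).1 0 0) ((g^(2^n)).1 1 1)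
  linarith

theorem bdd_par (g : SL2) (hg : g ∈ Γ) (h : g.1.trace = 2) : g = 1 := by
  have hdet := g.2
  rw [Matrix.det_fin_two] at hdet
  rw [Matrix.trace_fin_two] at h
  have key : ∀ n : ℕ, ∀ i j, (g^n).1 i j = n * (g.1 i j - (1 : Matrix (Fin 2) (Fin 2) ℝ) i j) + (1 : Matrix (Fin 2) (Fin 2) ℝ) i j := by
    intro n
    induction n with
    | zero => intro i j; simp
    | succ n ih =>
      intro i j
      rw [pow_succ, Matrix.SpecialLinearGroup.coe_mul, Matrix.mul_apply, Fin.sum_univ_two, ih, ih]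
      push_cast
      fin_cases i <;> fin_cases j <;> simp <;> simp [Matrix.one_apply]
      · linear_combination (-(n:ℝ)) * hdet + n * g.1 0 0 * h
      · linear_combination n * g.1 0 1 * h
      · linear_combination n * g.1 1 0 * h
      · linear_combination (-(n:ℝ)) * hdet + n * g.1 1 1 * h
  ext i j
  by_contra hne
  have hne' : 0 < |g.1 i j - (1 : Matrix (Fin 2) (Fin 2) ℝ) i j| := abs_pos.mpr (sub_ne_zero.mpr hne)
  obtain ⟨n, hn⟩ := exists_nat_gt ((C + 1) / |g.1 i j - (1 : Matrix (Fin 2) (Fin 2) ℝ) i j|)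
  rw [div_lt_iff₀ hne'] at hn
  have h1 := hC _ (Γ.pow_mem hg n) i j
  rw [key] at h1
  have h2 : |(1 : Matrix (Fin 2) (Fin 2) ℝ) i j| ≤ 1 := by
    fin_cases i <;> fin_cases j <;> simp
  have h3 := abs_sub (n * (g.1 i j - (1 : Matrix (Fin 2) (Fin 2) ℝ) i j) + (1 : Matrix (Fin 2) (Fin 2) ℝ) i j) ((1 : Matrix (Fin 2) (Fin 2) ℝ) i j)
  rw [add_sub_cancel_right, abs_mul, Nat.abs_cast] at h3
  linarith

theorem bdd_ell (A B : SL2) (hA : A ∈ Γ) (hB : B ∈ Γ) (h : |A.1.trace| < 2) : A * B = B * A := by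
  have h1 := bdd_tr Γ C hC (A*B*(A⁻¹*B⁻¹))
    (Γ.mul_mem (Γ.mul_mem hA hB) (Γ.mul_mem (Γ.inv_mem hA) (Γ.inv_mem hB)))
  have h1' := (abs_le.mp h1).2
  have dA := A.2
  have dB := B.2
  rw [Matrix.det_fin_two] at dA dB
  rw [Matrix.trace_fin_two] at h
  have h4 : (A.1 0 0 + A.1 1 1)^2 < 4 := by
    have := abs_lt.mp h; nlinarith
  have := real_comm _ _ _ _ _ _ _ _ dA dB h4 (by
    refine le_trans (le_of_eq ?_) h1'
    simp only [Matrix.trace_fin_two, Matrix.SpecialLinearGroup.coe_mul, Matrix.mul_apply,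
      Fin.sum_univ_two, Matrix.SpecialLinearGroup.coe_inv, Matrix.adjugate_fin_two]
    simp
    ring)
  obtain ⟨e1, e2, e3, e4⟩ := this
  ext i j
  rw [Matrix.SpecialLinearGroup.coe_mul, Matrix.SpecialLinearGroup.coe_mul, Matrix.mul_apply, Matrix.mul_apply, Fin.sum_univ_two, Fin.sum_univ_two]
  fin_cases i <;> fin_cases j
  · exact e1
  · exact e2
  · exact e3
  · exact e4

theorem bdd_comm (g h : SL2) (hg : g ∈ Γ) (hh : h ∈ Γ) : g * h = h * g := by
  by_cases h1 : |g.1.trace| < 2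
  · exact bdd_ell Γ C hC g h hg hh h1
  have h2 : |g.1.trace| = 2 := le_antisymm (bdd_tr Γ C hC g hg) (not_lt.mp h1)
  have h3 : g ^ 2 = 1 := bdd_par Γ C hC _ (Γ.pow_mem hg 2) (by
    rw [tr_sq, ← sq_abs, h2]; norm_num)
  rcases eq_or_eq_neg_of_abs_eq h2 with h4 | h4
  · rw [bdd_par Γ C hC g hg h4]; simp
  · have dg := g.2
    rw [Matrix.det_fin_two] at dg
    rw [Matrix.trace_fin_two] at h4
    have e : ∀ i j, (g^2).1 i j = (1 : Matrix (Fin 2) (Fin 2) ℝ) i j := fun i j => by rw [h3]; rfl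
    simp only [sq, Matrix.SpecialLinearGroup.coe_mul, Matrix.mul_apply, Fin.sum_univ_two] at e
    have e00 := e 0 0
    have e01 := e 0 1
    have e10 := e 1 0
    have e11 := e 1 1
    simp at e00 e01 e10 e11
    have f00 : g.1 0 0 = -1 := by linear_combination (-1/2) * e00 - 1/2 * dg + 1/2 * g.1 0 0 * h4
    have f11 : g.1 1 1 = -1 := by linear_combination (-1/2) * e11 - 1/2 * dg + 1/2 * g.1 1 1 * h4
    have f01 : g.1 0 1 = 0 := by linear_combination (-1/2) * e01 + 1/2 * g.1 0 1 * h4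
    have f10 : g.1 1 0 = 0 := by linear_combination (-1/2) * e10 + 1/2 * g.1 1 0 * h4
    ext i j
    rw [Matrix.SpecialLinearGroup.coe_mul, Matrix.SpecialLinearGroup.coe_mul, Matrix.mul_apply, Matrix.mul_apply, Fin.sum_univ_two, Fin.sum_univ_two]
    fin_cases i <;> fin_cases j <;> simp [f00, f01, f10, f11]

theorem bdd_solvable : Group.IsSolvable Γ :=
  Group.isSolvable_of_comm fun a b => Subtype.ext (bdd_comm Γ C hC _ _ a.2 b.2)
end

section
open scoped commutatorElement

/-! ### Invariant measures -/

theorem sumsq_pos (v : {v : Fin 2 → ℝ // v ≠ 0}) : 0 < v.1 0 ^ 2 + v.1 1 ^ 2 := by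
  by_contra! h
  apply v.2
  have h0 : v.1 0 = 0 := by nlinarith [sq_nonneg (v.1 0), sq_nonneg (v.1 1)]
  have h1 : v.1 1 = 0 := by nlinarith [sq_nonneg (v.1 0), sq_nonneg (v.1 1)]
  ext i; fin_cases i
  · exact h0
  · exact h1

/-- peak function at the class of u -/
def peak (u : {v : Fin 2 → ℝ // v ≠ 0}) : PX → ℝ :=
  Projectivization.lift (fun v : {v : Fin 2 → ℝ // v ≠ 0} =>
    1 - (v.1 0 * u.1 1 - v.1 1 * u.1 0) ^ 2 / ((v.1 0 ^ 2 + v.1 1 ^ 2) * (u.1 0 ^ 2 + u.1 1 ^ 2)))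
  (by
    intro a b t h
    have ha := sumsq_pos a
    have hb := sumsq_pos b
    have hu := sumsq_pos u
    have h0 : a.1 0 = t * b.1 0 := by rw [h]; simp
    have h1 : a.1 1 = t * b.1 1 := by rw [h]; simp
    rw [h0, h1] at ha ⊢
    have ht : t ≠ 0 := by rintro rfl; simp at ha
    congr 1
    rw [div_eq_div_iff (by positivity) (by positivity)]
    ring)

theorem peak_pr (u v : {v : Fin 2 → ℝ // v ≠ 0}) : peak u (pr v) =
    1 - (v.1 0 * u.1 1 - v.1 1 * u.1 0) ^ 2 / ((v.1 0 ^ 2 + v.1 1 ^ 2) * (u.1 0 ^ 2 + u.1 1 ^ 2)) :=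
  rfl

theorem exists_peak (y : PX) : ∃ q : PX → ℝ, Continuous q ∧ (∀ x, 0 ≤ q x) ∧ (∀ x, q x ≤ 1) ∧
    (∀ x, q x = 1 ↔ x = y) := by
  obtain ⟨u, rfl⟩ := pr_surj y
  have hu := sumsq_pos u
  refine ⟨peak u, ?_, ?_, ?_, ?_⟩
  · rw [pr_quot.continuous_iff]
    have : peak u ∘ pr = fun v => 1 - (v.1 0 * u.1 1 - v.1 1 * u.1 0) ^ 2 /
      ((v.1 0 ^ 2 + v.1 1 ^ 2) * (u.1 0 ^ 2 + u.1 1 ^ 2)) := rfl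
    rw [this]
    have c : ∀ i : Fin 2, Continuous (fun v : {v : Fin 2 → ℝ // v ≠ 0} => v.1 i) := fun i =>
      (continuous_apply i).comp continuous_subtype_val
    refine continuous_const.sub (Continuous.div ?_ ?_ ?_)
    · exact (((c 0).mul continuous_const).sub ((c 1).mul continuous_const)).pow 2
    · exact (((c 0).pow 2).add ((c 1).pow 2)).mul continuous_const
    · intro v; have := sumsq_pos v; positivity
  · intro x
    obtain ⟨v, rfl⟩ := pr_surj x
    have hv := sumsq_pos v
    rw [peak_pr, sub_nonneg, div_le_one (by positivity)]
    nlinarith [sq_nonneg (v.1 0 * u.1 0 + v.1 1 * u.1 1)]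
  · intro x
    obtain ⟨v, rfl⟩ := pr_surj x
    have hv := sumsq_pos v
    rw [peak_pr, sub_le_self_iff]
    positivity
  · intro x
    obtain ⟨v, rfl⟩ := pr_surj x
    have hv := sumsq_pos v
    rw [peak_pr, pr_eq_iff, sub_eq_self, div_eq_zero_iff, pow_eq_zero_iff two_ne_zero]
    constructor
    · rintro (h | h)
      · exact h
      · exact absurd h (by positivity)
    · exact Or.inl

instance : T1Space PX := ⟨fun y => by
  obtain ⟨q, hq, -, -, h1⟩ := exists_peak y
  have : {y} = q ⁻¹' {1} := by ext x; simp [h1]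
  rw [this]
  exact isClosed_singleton.preimage hq⟩

section
variable (ν : Measure PX) [IsProbabilityMeasure ν]

theorem peak_tendsto {q : PX → ℝ} (hq : Continuous q) (h0 : ∀ x, 0 ≤ q x) (h1 : ∀ x, q x ≤ 1)
    {y : PX} (hy : ∀ x, q x = 1 ↔ x = y) :
    Tendsto (fun k : ℕ => ∫ x, q x ^ k ∂ν) atTop (nhds (ν.real {y})) := by
  have : ν.real {y} = ∫ x, Set.indicator {y} (fun _ => (1:ℝ)) x ∂ν := by
    rw [integral_indicator_const _ (measurableSet_singleton y)]; simp
  rw [this]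
  refine tendsto_integral_of_dominated_convergence (fun _ => 1) ?_ (integrable_const _) ?_ ?_
  · exact fun k => (hq.pow k).measurable.aestronglyMeasurable
  · refine fun k => Eventually.of_forall fun x => ?_
    rw [Real.norm_eq_abs, abs_of_nonneg (pow_nonneg (h0 x) k)]
    exact pow_le_one₀ (h0 x) (h1 x)
  · refine Eventually.of_forall fun x => ?_
    by_cases hx : x = y
    · have := (hy x).mpr hx
      simp [hx]
      simp [(hy y).mpr rfl]
    · have h : q x < 1 := lt_of_le_of_ne (h1 x) (fun h => hx ((hy x).mp h))
      simp only [Set.indicator, Set.mem_singleton_iff, hx, if_false]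
      exact tendsto_pow_atTop_nhds_zero_of_lt_one (h0 x) h

variable (Γ : Subgroup SL2)
  (hinv : ∀ g ∈ Γ, ∀ f : PX → ℝ, Continuous f → ∫ x, f (act g x) ∂ν = ∫ x, f x ∂ν)

theorem act_inj (g : SL2) {x y : PX} : act g x = act g y ↔ x = y := by
  constructor
  · intro h
    have := congrArg (act g⁻¹) h
    simpa only [← act_mul, inv_mul_cancel, act_one] using this
  · rintro rfl; rfl

include hinv in
theorem atom_inv (g : SL2) (hg : g ∈ Γ) (y : PX) : ν.real {act g y} = ν.real {y} := by
  obtain ⟨q, hq, h0, h1, hy⟩ := exists_peak (act g y)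
  have t1 := peak_tendsto ν hq h0 h1 hy
  have t2 := peak_tendsto ν (q := fun x => q (act g x)) (hq.comp (continuous_act_right g))
    (fun x => h0 _) (fun x => h1 _) (y := y) (fun x => by rw [hy, act_inj])
  have : (fun k : ℕ => ∫ x, q (act g x) ^ k ∂ν) = fun k : ℕ => ∫ x, q x ^ k ∂ν := by
    ext k
    exact hinv g hg (fun x => q x ^ k) (hq.pow k)
  rw [this] at t2
  exact tendsto_nhds_unique t1 t2

include hinv in
theorem exists_atom (hub : ¬ ∃ C : ℝ, ∀ g ∈ Γ, ∀ i j, |g.1 i j| ≤ C) :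
    ∃ y, 1 / 2 ≤ ν.real {y} := by
  let e : SL2 → (Fin 2 → Fin 2 → ℝ) := fun g => g.1
  have hub' : ∀ n : ℕ, ∃ g ∈ Γ, (n + 1 : ℝ) < ‖e g‖ := by
    intro n
    by_contra! h
    refine hub ⟨n + 1, fun g hg i j => ?_⟩
    exact ((norm_le_pi_norm (e g i) j).trans (norm_le_pi_norm (e g) i)).trans (h g hg)
  choose g hg hn using hub'
  have hpos : ∀ n, 0 < ‖e (g n)‖ := fun n => lt_trans (by positivity) (hn n)
  have hmem : ∀ n, ‖e (g n)‖⁻¹ • e (g n) ∈ Metric.sphere (0 : Fin 2 → Fin 2 → ℝ) 1 := fun n => by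
    simp [norm_smul, (hpos n).ne']
  obtain ⟨A, hA, φ, hφ, hlim⟩ := (isCompact_sphere (0 : Fin 2 → Fin 2 → ℝ) 1).tendsto_subseq hmem
  have hAn : ‖A‖ = 1 := by simpa using hA
  have hent : ∀ i j, Tendsto (fun n => ‖e (g (φ n))‖⁻¹ * (g (φ n)).1 i j) atTop (nhds (A i j)) := by
    intro i j
    exact (tendsto_pi_nhds.mp (tendsto_pi_nhds.mp hlim i) j)
  have hinvn : Tendsto (fun n => ‖e (g (φ n))‖⁻¹) atTop (nhds 0) := by
    refine tendsto_inv_atTop_zero.comp ?_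
    refine tendsto_atTop_mono (fun n => (hn (φ n)).le) ?_
    exact tendsto_atTop_add_const_right _ _ (tendsto_natCast_atTop_atTop.comp hφ.tendsto_atTop)
  have hdet : A 0 0 * A 1 1 - A 0 1 * A 1 0 = 0 := by
    have t1 := ((hent 0 0).mul (hent 1 1)).sub ((hent 0 1).mul (hent 1 0))
    have t2 := hinvn.mul hinvn
    rw [mul_zero] at t2
    refine tendsto_nhds_unique t1 (t2.congr fun n => ?_)
    have := (g (φ n)).2
    rw [Matrix.det_fin_two] at this
    linear_combination (-‖e (g (φ n))‖⁻¹^2) * this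
  obtain ⟨i, j, hij⟩ : ∃ i j, A i j ≠ 0 := by
    by_contra! h
    have : A = 0 := by ext i j; exact h i j
    rw [this] at hAn; simp at hAn
  let u : {v : Fin 2 → ℝ // v ≠ 0} := ⟨fun k => A k j, fun h => hij (congrFun h i)⟩
  let w : {v : Fin 2 → ℝ // v ≠ 0} := ⟨![-A i 1, A i 0], fun h => hij (by
    have h0 := congrFun h 0
    have h1 := congrFun h 1
    simp at h0 h1
    fin_cases j
    · exact h1
    · exact h0)⟩
  have hconv : ∀ x, x ≠ pr w → Tendsto (fun n => act (g (φ n)) x) atTop (nhds (pr u)) := by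
    intro x hx
    obtain ⟨v, rfl⟩ := pr_surj x
    have hvw : v.1 0 * A i 0 + v.1 1 * A i 1 ≠ 0 := by
      intro h
      apply hx
      rw [pr_eq_iff]
      simp [w]
      linarith
    have hlimne : (fun k => A k 0 * v.1 0 + A k 1 * v.1 1 : Fin 2 → ℝ) ≠ 0 := by
      intro h
      have := congrFun h i
      simp at this
      apply hvw; linarith
    have hne : ∀ n, (fun k => ‖e (g (φ n))‖⁻¹ * (g (φ n)).1 k 0 * v.1 0 +
        ‖e (g (φ n))‖⁻¹ * (g (φ n)).1 k 1 * v.1 1 : Fin 2 → ℝ) ≠ 0 := by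
      intro n h
      apply mulVec_ne (g (φ n)) v.2
      ext k
      have := congrFun h k
      simp only [Pi.zero_apply] at this
      have h2 : ‖e (g (φ n))‖⁻¹ * ((g (φ n)).1 k 0 * v.1 0 + (g (φ n)).1 k 1 * v.1 1) = 0 := by
        rw [← this]; ring
      rcases mul_eq_zero.mp h2 with h3 | h3
      · exact absurd h3 (inv_ne_zero (hpos _).ne')
      · simpa [Matrix.mulVec, dotProduct, Fin.sum_univ_two] using h3
    have e1 : ∀ n, act (g (φ n)) (pr v) = pr ⟨_, hne n⟩ := by
      intro n
      rw [act_pr, pr_eq_iff]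
      simp [Matrix.mulVec, dotProduct, Fin.sum_univ_two]
      ring
    have e2 : pr u = pr ⟨_, hlimne⟩ := by
      rw [pr_eq_iff]
      simp only [u]
      fin_cases j
      · simp only [Fin.zero_eta]; linear_combination v.1 1 * hdet
      · simp only [Fin.mk_one]; linear_combination (-v.1 0) * hdet
    simp only [e1]
    rw [e2]
    refine (pr_quot.continuous.tendsto _).comp ?_
    rw [tendsto_subtype_rng, tendsto_pi_nhds]
    intro k
    exact ((hent k 0).mul_const _).add ((hent k 1).mul_const _)
  obtain ⟨q, hq, h0, h1, hy⟩ := exists_peak (pr u)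
  have hw : MeasurableSet ({pr w}ᶜ : Set PX) := (measurableSet_singleton _).compl
  have hk : ∀ k : ℕ, 1 - ν.real {pr w} ≤ ∫ x, q x ^ k ∂ν := by
    intro k
    have hbd : ∀ x, ‖q x ^ k‖ ≤ 1 := fun x => by
      rw [Real.norm_eq_abs, abs_of_nonneg (pow_nonneg (h0 x) k)]
      exact pow_le_one₀ (h0 x) (h1 x)
    have t : Tendsto (fun n => ∫ x in {pr w}ᶜ, q (act (g (φ n)) x) ^ k ∂ν) atTop
        (nhds (∫ x in {pr w}ᶜ, (1:ℝ) ∂ν)) := by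
      refine tendsto_integral_of_dominated_convergence (fun _ => 1) ?_ (integrable_const _) ?_ ?_
      · exact fun n => ((hq.comp (continuous_act_right _)).pow k).measurable.aestronglyMeasurable
      · exact fun n => Eventually.of_forall fun x => hbd _
      · refine (ae_restrict_iff' hw).mpr (Eventually.of_forall fun x hx => ?_)
        have := (((hq.pow k).tendsto (pr u)).comp (hconv x hx))
        simpa [(hy (pr u)).mpr rfl, Function.comp_def] using this
    have hval : ∫ x in {pr w}ᶜ, (1:ℝ) ∂ν = 1 - ν.real {pr w} := by
      simp [probReal_compl_eq_one_sub (measurableSet_singleton (pr w))]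
    rw [hval] at t
    refine le_of_tendsto' t fun n => ?_
    rw [← hinv (g (φ n)) (hg _) (fun x => q x ^ k) (hq.pow k)]
    refine setIntegral_le_integral ?_ (Eventually.of_forall fun x => pow_nonneg (h0 _) k)
    exact integrable_of_bdd ((hq.comp (continuous_act_right _)).pow k).measurable (fun x => hbd _)
  have := ge_of_tendsto' (peak_tendsto ν hq h0 h1 hy) hk
  by_contra! hcon
  have a1 := hcon (pr u)
  have a2 := hcon (pr w)
  linarith

theorem atoms_le_two {x y z : PX} (hx : 1 / 2 ≤ ν.real {x}) (hy : 1 / 2 ≤ ν.real {y})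
    (hz : 1 / 2 ≤ ν.real {z}) : x = y ∨ y = z ∨ x = z := by
  by_contra! h
  obtain ⟨h1, h2, h3⟩ := h
  have e : ν.real ({x} ∪ ({y} ∪ {z})) = ν.real {x} + (ν.real {y} + ν.real {z}) := by
    rw [measureReal_union (by simp [h1, h3]) (by measurability),
      measureReal_union (by simp [h2]) (by measurability)]
  have := measureReal_le_one (μ := ν) (s := {x} ∪ ({y} ∪ {z}))
  linarith

theorem fix_comm (g h : SL2) (v : Fin 2 → ℝ) (hv : v ≠ 0) (hg : g.1.mulVec v = v)
    (hh : h.1.mulVec v = v) : g * h = h * g := by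
  have dg := g.2
  have dh := h.2
  rw [Matrix.det_fin_two] at dg dh
  have g0 := congrFun hg 0
  have g1 := congrFun hg 1
  have h0 := congrFun hh 0
  have h1 := congrFun hh 1
  simp only [Matrix.mulVec, dotProduct, Fin.sum_univ_two] at g0 g1 h0 h1
  have tr : ∀ a b c d x y : ℝ, (x ≠ 0 ∨ y ≠ 0) → a*d-b*c=1 → a*x+b*y=x → c*x+d*y=y → a+d=2 := by
    intro a b c d x y hxy hd e1 e2
    have k1 : x * ((a-1)*(d-1)-b*c) = 0 := by linear_combination (d-1)*e1 - b*e2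
    have k2 : y * ((a-1)*(d-1)-b*c) = 0 := by linear_combination (a-1)*e2 - c*e1
    have k3 : (a-1)*(d-1)-b*c = 0 := by
      rcases hxy with h | h
      · exact (mul_eq_zero.mp k1).resolve_left h
      · exact (mul_eq_zero.mp k2).resolve_left h
    linear_combination hd - k3
  have hxy : v 0 ≠ 0 ∨ v 1 ≠ 0 := by
    by_contra! hc
    apply hv; ext i; fin_cases i
    · exact hc.1
    · exact hc.2
  have tg := tr _ _ _ _ _ _ hxy dg g0 g1
  have th := tr _ _ _ _ _ _ hxy dh h0 h1
  have key : g.1 0 1 * h.1 1 0 = h.1 0 1 * g.1 1 0 ∧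
      (g.1 0 0 - 1) * h.1 0 1 = (h.1 0 0 - 1) * g.1 0 1 ∧
      (g.1 0 0 - 1) * h.1 1 0 = (h.1 0 0 - 1) * g.1 1 0 := by
    generalize g.1 0 0 = a at *
    generalize g.1 0 1 = b at *
    generalize g.1 1 0 = c at *
    generalize g.1 1 1 = d at *
    generalize h.1 0 0 = p at *
    generalize h.1 0 1 = q at *
    generalize h.1 1 0 = r at *
    generalize h.1 1 1 = s at *
    generalize v 0 = x at *
    generalize v 1 = y at *
    obtain rfl : d = 2 - a := by linarith
    obtain rfl : s = 2 - p := by linarith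
    rcases hxy with hx | hy
    · have ea : a = 1 - b * (y/x) := by field_simp; linarith
      have ep : p = 1 - q * (y/x) := by field_simp; linarith
      have ec : c = (a-1) * (y/x) := by field_simp; linarith
      have er : r = (p-1) * (y/x) := by field_simp; linarith
      subst ec er
      subst ea ep
      refine ⟨?_, ?_, ?_⟩ <;> ring
    · have eb : b = (1-a) * (x/y) := by field_simp; linarith
      have eq : q = (1-p) * (x/y) := by field_simp; linarith
      have ea : a = 1 + c * (x/y) := by field_simp; linarith
      have ep : p = 1 + r * (x/y) := by field_simp; linarith
      subst eb eq
      subst ea ep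
      refine ⟨?_, ?_, ?_⟩ <;> ring
  obtain ⟨k1, k2, k3⟩ := key
  ext i j
  rw [Matrix.SpecialLinearGroup.coe_mul, Matrix.SpecialLinearGroup.coe_mul, Matrix.mul_apply, Matrix.mul_apply, Fin.sum_univ_two, Fin.sum_univ_two]
  fin_cases i <;> fin_cases j <;> simp
  · linear_combination k1
  · linear_combination 2 * k2 + g.1 0 1 * th - h.1 0 1 * tg
  · linear_combination -2 * k3 - g.1 1 0 * th + h.1 1 0 * tg
  · linear_combination -k1

/-- stabilizer of a point, in Γ -/
def S1 (y : PX) : Subgroup Γ where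
  carrier := {g | act g.1 y = y}
  mul_mem' {a b} ha hb := by
    simp only [Set.mem_ofPred_eq] at *
    rw [Subgroup.coe_mul, act_mul, hb, ha]
  one_mem' := act_one y
  inv_mem' {a} ha := by
    simp only [Set.mem_ofPred_eq] at *
    conv_lhs => rw [← ha]
    rw [← act_mul]; simp [act_one]

/-- stabilizer of a vector, in Γ -/
def S2 (v : Fin 2 → ℝ) : Subgroup Γ where
  carrier := {g | g.1.1.mulVec v = v}
  mul_mem' {a b} ha hb := by
    simp only [Set.mem_ofPred_eq] at *
    rw [Subgroup.coe_mul, Matrix.SpecialLinearGroup.coe_mul, ← Matrix.mulVec_mulVec, hb, ha]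
  one_mem' := Matrix.one_mulVec v
  inv_mem' {a} ha := by
    simp only [Set.mem_ofPred_eq] at *
    conv_lhs => rw [← ha]
    rw [Matrix.mulVec_mulVec, ← Matrix.SpecialLinearGroup.coe_mul]
    simp

theorem solvable_of_fix (A : Set PX) (hA : ∀ g ∈ Γ, ∀ y ∈ A, act g y ∈ A)
    (h2 : ∀ x ∈ A, ∀ y ∈ A, ∀ z ∈ A, x = y ∨ y = z ∨ x = z) (hne : A.Nonempty) :
    Group.IsSolvable Γ := by
  obtain ⟨y, hy⟩ := hne
  obtain ⟨v, rfl⟩ := pr_surj y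
  have comm : ∀ g ∈ Γ, ∀ h ∈ Γ, ∀ z ∈ A, act (g * h) z = act (h * g) z := by
    intro g hg h hh z hz
    have inj1 := fun x y => act_inj g (x := x) (y := y)
    have inj2 := fun x y => act_inj h (x := x) (y := y)
    have a1 := hA g hg z hz
    have a2 := hA h hh z hz
    have a3 := hA g hg _ a2
    have a4 := hA h hh _ a1
    have b1 := hA g hg _ a1
    have b2 := hA h hh _ a2
    rw [act_mul, act_mul]
    grind
  have d1 : derivedSeries Γ 1 ≤ S1 Γ (pr v) := by
    rw [derivedSeries_succ]
    refine Subgroup.commutator_le.mpr fun g _ h _ => ?_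
    change act (⁅g, h⁆ : Γ).1 (pr v) = pr v
    have hz : act (g.1⁻¹ * h.1⁻¹) (pr v) ∈ A := 
      hA _ (Γ.mul_mem (Γ.inv_mem g.2) (Γ.inv_mem h.2)) _ hy
    have := comm g.1 g.2 h.1 h.2 _ hz
    rw [← act_mul, ← act_mul] at this
    have e1 : (⁅g, h⁆ : Γ).1 = g.1 * h.1 * (g.1⁻¹ * h.1⁻¹) := by
      simp [commutatorElement_def, mul_assoc]
    rw [e1, this]
    have e2 : h.1 * g.1 * (g.1⁻¹ * h.1⁻¹) = 1 := by group
    rw [e2, act_one]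
  have ev : ∀ g : Γ, g ∈ S1 Γ (pr v) → ∃ a : ℝ, g.1.1.mulVec v.1 = a • v.1 := by
    intro g hg
    have : act g.1 (pr v) = pr v := hg
    rw [act_pr] at this
    obtain ⟨a, ha⟩ := (Projectivization.mk_eq_mk_iff' ℝ _ _ (mulVec_ne g.1 v.2) v.2).mp this
    exact ⟨a, ha.symm⟩
  have d2 : derivedSeries Γ 2 ≤ S2 Γ v.1 := by
    rw [derivedSeries_succ]
    refine (Subgroup.commutator_mono d1 d1).trans ?_
    refine Subgroup.commutator_le.mpr fun g hg h hh => ?_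
    change (⁅g, h⁆ : Γ).1.1.mulVec v.1 = v.1
    obtain ⟨a, ha⟩ := ev g hg
    obtain ⟨b, hb⟩ := ev h hh
    obtain ⟨c, hc⟩ := ev (g⁻¹ * h⁻¹) ((S1 Γ (pr v)).mul_mem ((S1 Γ (pr v)).inv_mem hg) ((S1 Γ (pr v)).inv_mem hh))
    have e1 : (⁅g, h⁆ : Γ).1 = g.1 * h.1 * (g⁻¹ * h⁻¹ : Γ).1 := by
      simp [commutatorElement_def, mul_assoc]
    have e2 : h.1 * g.1 * (g⁻¹ * h⁻¹ : Γ).1 = 1 := by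
      simp only [Subgroup.coe_mul, Subgroup.coe_inv]; group
    have e3 : (h.1 * g.1 * (g⁻¹ * h⁻¹ : Γ).1).1.mulVec v.1 = v.1 := by rw [e2]; simp
    rw [e1]
    rw [Matrix.SpecialLinearGroup.coe_mul, Matrix.SpecialLinearGroup.coe_mul, 
      ← Matrix.mulVec_mulVec, ← Matrix.mulVec_mulVec, hc] at e3 ⊢
    simp only [Matrix.mulVec_smul, ha, hb] at e3 ⊢
    refine Eq.trans ?_ e3
    module
  have d3 : derivedSeries Γ 3 ≤ ⊥ := by
    rw [derivedSeries_succ]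
    refine (Subgroup.commutator_mono d2 d2).trans ?_
    refine Subgroup.commutator_le.mpr fun g hg h hh => ?_
    rw [Subgroup.mem_bot, commutatorElement_eq_one_iff_mul_comm]
    exact Subtype.ext (fix_comm g.1 h.1 v.1 v.2 hg hh)
  exact ⟨⟨3, le_bot_iff.mp d3⟩⟩

include hinv in
theorem solvable_of_inv : Group.IsSolvable Γ := by
  by_cases hub : ∃ C : ℝ, ∀ g ∈ Γ, ∀ i j, |g.1 i j| ≤ C
  · obtain ⟨C, hC⟩ := hub
    exact bdd_solvable Γ C hC
  · refine solvable_of_fix Γ {y | 1 / 2 ≤ ν.real {y}} ?_ ?_ (exists_atom ν Γ hinv hub)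
    · intro g hg y hy
      simpa only [Set.mem_ofPred_eq, atom_inv ν Γ hinv g hg] using hy
    · intro x hx y hy z hz
      exact atoms_le_two ν hx hy hz
end
end

theorem opNorm_cont : Continuous opNorm := by
  have h : Continuous (fun A : Matrix (Fin 2) (Fin 2) ℝ =>
      Matrix.toEuclideanCLM (𝕜 := ℝ) (n := Fin 2) A) :=
    LinearMap.continuous_of_finiteDimensional
      (Matrix.toEuclideanCLM (𝕜 := ℝ) (n := Fin 2)).toAlgEquiv.toLinearMap
  exact (h.comp continuous_coe_sl2).norm

theorem entry_le_opNorm (g : SL2) (i j : Fin 2) : |g.1 i j| ≤ opNorm g := by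
  have h := (Matrix.toEuclideanCLM (𝕜 := ℝ) (n := Fin 2) g.1).le_opNorm (EuclideanSpace.single j 1)
  have h2 := PiLp.norm_apply_le (Matrix.toEuclideanCLM (𝕜 := ℝ) (n := Fin 2) g.1 (EuclideanSpace.single j 1)) i
  have h3 : (Matrix.toEuclideanCLM (𝕜 := ℝ) (n := Fin 2) g.1 (EuclideanSpace.single j 1)) i = g.1 i j := by
    simp
  rw [h3] at h2
  simp only [EuclideanSpace.norm_single, norm_one, mul_one] at h
  exact h2.trans h

theorem measurable_kappa : Measurable kappa := Real.measurable_log.comp opNorm_cont.measurable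

theorem kappa_one : kappa 1 = 0 := by
  simp [kappa, opNorm]

/-- a compact set containing the sublevel set -/
theorem exists_compact (t : ℝ) : ∃ K : Set SL2, IsCompact K ∧ {g | kappa g < t} ⊆ K := by
  have hc : IsCompact (Set.univ.pi fun _ : Fin 2 => Set.univ.pi fun _ : Fin 2 =>
    Set.Icc (-Real.exp t) (Real.exp t)) := isCompact_univ_pi fun _ => isCompact_univ_pi fun _ => isCompact_Icc
  refine ⟨_, sl2_closedEmb.isCompact_preimage (K := (Set.univ.pi fun _ : Fin 2 => Set.univ.pi fun _ : Fin 2 =>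
    Set.Icc (-Real.exp t) (Real.exp t))) hc, ?_⟩
  intro g hg
  have hg' : opNorm g ≤ Real.exp t := by
    by_cases h0 : opNorm g ≤ 0
    · exact h0.trans (Real.exp_pos t).le
    · have : Real.log (opNorm g) < t := hg
      exact ((Real.log_lt_iff_lt_exp (not_le.mp h0)).mp this).le
  intro i _ j _
  exact abs_le.mp ((entry_le_opNorm g i j).trans hg')

section
variable (μ : Measure SL2) [IsProbabilityMeasure μ] (ν : Measure PX) [IsProbabilityMeasure ν]

theorem exists_Dh_ne (hzd : ZariskiDense μ) (s : SL2) :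
    ∃ f : PX → ℝ, Continuous f ∧ Dh μ ν f s ≠ 0 := by
  by_contra! hcon
  apply hzd
  apply solvable_of_inv ν
  let H : Subgroup SL2 :=
    { carrier := {g | ∀ f : PX → ℝ, Continuous f → ∫ x, f (act g x) ∂ν = ∫ x, f x ∂ν}
      mul_mem' := by
        intro a b ha hb f hf
        simp only [act_mul]
        rw [hb (fun x => f (act a x)) (hf.comp (continuous_act_right a)), ha f hf]
      one_mem' := by intro f hf; simp [act_one]
      inv_mem' := by
        intro a ha f hf
        have := ha (fun x => f (act a⁻¹ x)) (hf.comp (continuous_act_right _))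
        simp only [← act_mul, inv_mul_cancel, act_one] at this
        exact this.symm }
  have hle : Subgroup.closure (measSupp μ) ≤ H := by
    rw [Subgroup.closure_le]
    intro g hg f hf
    by_contra hne
    let k : PX → ℝ := fun x => f (act s⁻¹ x)
    have hk : Continuous k := hf.comp (continuous_act_right _)
    have e1 : ∀ g, Fh ν k (s * g) = ∫ x, f (act g x) ∂ν := fun g => by
      simp only [Fh, k, ← act_mul, inv_mul_cancel_left]
    have e2 : Fh ν k s = ∫ x, f x ∂ν := by
      simp only [Fh, k, ← act_mul, inv_mul_cancel, act_one]
    obtain ⟨C, hC0, hC⟩ := exists_bound k hk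
    have hD := hcon k hk
    have hcont : Continuous (fun g => (Fh ν k (s * g) - Fh ν k s)^2) :=
      (((Fh_cont ν hk).comp (continuous_const_mul s)).sub continuous_const).pow 2
    have hsqI : Integrable (fun g => (Fh ν k (s * g) - Fh ν k s)^2) μ := by
      refine integrable_of_bdd (C := (C + C)^2) hcont.measurable fun g => ?_
      rw [abs_pow]
      gcongr
      exact (abs_sub _ _).trans (add_le_add (Fh_bdd ν hC _) (Fh_bdd ν hC _))
    have hae := (integral_eq_zero_iff_of_nonneg (fun g => sq_nonneg _) hsqI).mp hD
    have hU : IsOpen {g | (Fh ν k (s * g) - Fh ν k s)^2 ≠ 0} := isOpen_ne_fun hcont continuous_const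
    have hpos := hg _ hU (by
      rw [Set.mem_ofPred_eq, e1, e2]
      exact pow_ne_zero 2 (sub_ne_zero.mpr hne))
    exact hpos.ne' hae
  exact fun g hg => hle hg

theorem law_small (hstat : IsMuStationary μ ν) (hzd : ZariskiDense μ) (t : ℝ) :
    Summable (fun n => (law μ n).real {g | kappa g < t}) := by
  obtain ⟨K, hK, hsub⟩ := exists_compact t
  exact Summable.of_nonneg_of_le (fun n => measureReal_nonneg) (fun n => measureReal_mono hsub)
    (transient μ ν hstat (exists_Dh_ne μ ν hzd) hK)

theorem meas_cast (n : ℕ) {L : Set SL2} (hL : MeasurableSet L) :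
    (μpi μ (n+1)).real {g | word (g ∘ Fin.castSucc) ∈ L} = (law μ n).real L := by
  have h := (joint_mp μ n).measure_preimage (hL.prod MeasurableSet.univ).nullMeasurableSet
  rw [Measure.prod_prod, measure_univ, mul_one] at h
  unfold Measure.real
  rw [← h]
  congr 2
  ext g
  simp

theorem meas_word (n : ℕ) {L : Set SL2} (hL : MeasurableSet L) :
    (μpi μ n).real {g | word g ∈ L} = (law μ n).real L := by
  unfold Measure.real law
  rw [Measure.map_apply (measurable_word n) hL]
  rfl

theorem Fh_law (hstat : IsMuStationary μ ν) {f : PX → ℝ} (hf : Continuous f) (n : ℕ) :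
    ∫ s, Fh ν f s ∂(law μ n) = ∫ x, f x ∂ν := by
  obtain ⟨C, hC0, hC⟩ := exists_bound f hf
  induction n with
  | zero => 
    rw [law_zero, integral_dirac]
    simp [Fh, act_one]
  | succ n ih =>
    rw [integral_law_succ μ n (Fh_cont ν hf).measurable (Fh_bdd ν hC)]
    simp only [Fh_harm μ ν hstat hf]
    exact ih

/-- indicator of `t ≤ κ` -/
def Ind (t : ℝ) (s : SL2) : ℝ := Set.indicator {s | t ≤ kappa s} (fun _ => 1) s

theorem measurableSet_ge (t : ℝ) : MeasurableSet {s | t ≤ kappa s} :=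
  measurableSet_le measurable_const measurable_kappa

theorem measurableSet_klt (t : ℝ) : MeasurableSet {s | kappa s < t} :=
  measurableSet_lt measurable_kappa measurable_const

theorem Ind_meas (t : ℝ) : Measurable (Ind t) := measurable_const.indicator (measurableSet_ge t)

theorem Ind_abs (t : ℝ) (s : SL2) : |Ind t s| ≤ 1 := by
  unfold Ind Set.indicator; split_ifs <;> simp

theorem Ind_mul_abs (t : ℝ) (s : SL2) {y C : ℝ} (hy : |y| ≤ C) : |Ind t s * y| ≤ C := by
  rw [abs_mul]
  have := Ind_abs t s
  calc |Ind t s| * |y| ≤ 1 * |y| := by gcongr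
    _ ≤ C := by simpa using hy

/-- `c_n` -/
def cc (f : PX → ℝ) (t : ℝ) (n : ℕ) : ℝ := ∫ s, Ind t s * Fh ν f s ∂(law μ n)

theorem cc_zero (f : PX → ℝ) {t : ℝ} (ht : 0 < t) : cc μ ν f t 0 = 0 := by
  unfold cc
  rw [law_zero, integral_dirac]
  simp [Ind, kappa_one, ht]

theorem cc_tendsto (hstat : IsMuStationary μ ν) (hzd : ZariskiDense μ) {f : PX → ℝ}
    (hf : Continuous f) (t : ℝ) :
    Tendsto (cc μ ν f t) atTop (nhds (∫ x, f x ∂ν)) := by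
  obtain ⟨C, hC0, hC⟩ := exists_bound f hf
  have h1 : ∀ n, |cc μ ν f t n - ∫ x, f x ∂ν| ≤ C * (law μ n).real {g | kappa g < t} := by
    intro n
    have hFm := (Fh_cont ν hf).measurable
    have mI : Measurable (fun s => Ind t s * Fh ν f s) := (Ind_meas t).mul hFm
    have i1 : Integrable (fun s => Ind t s * Fh ν f s) (law μ n) :=
      integrable_of_bdd mI fun s => Ind_mul_abs t s (Fh_bdd ν hC s)
    have i2 : Integrable (fun s => Fh ν f s) (law μ n) := integrable_of_bdd hFm (Fh_bdd ν hC)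
    rw [← Fh_law μ ν hstat hf n, cc, ← integral_sub i1 i2]
    have e : (fun s => Ind t s * Fh ν f s - Fh ν f s) =
        Set.indicator {g | kappa g < t} (fun s => - Fh ν f s) := by
      ext s
      by_cases h : t ≤ kappa s
      · simp [Ind, Set.indicator, h, not_lt.mpr h]
      · simp [Ind, Set.indicator, h, not_le.mp h]
    rw [e, integral_indicator (measurableSet_klt t)]
    rw [← Real.norm_eq_abs]
    refine norm_setIntegral_le_of_norm_le_const (measure_lt_top (law μ n) _) (fun s _ => ?_)
    rw [norm_neg]
    exact Fh_bdd ν hC s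
  have h2 : Tendsto (fun n => C * (law μ n).real {g | kappa g < t}) atTop (nhds 0) := by
    simpa using ((law_small μ ν hstat hzd t).tendsto_atTop_zero).const_mul C
  rw [tendsto_iff_norm_sub_tendsto_zero]
  exact squeeze_zero (fun n => norm_nonneg _) h1 h2

/-- difference of terms -/
def FF (f : PX → ℝ) (t : ℝ) (n : ℕ) (x : PX) : ℝ :=
  ∫ g, (Ind t (word g) - Ind t (word (g ∘ Fin.castSucc))) * f (act (word g) x) ∂(μpi μ (n+1))

theorem meas_cast_fun (n : ℕ) :
    Measurable (fun g : Fin (n+1) → SL2 => word (g ∘ Fin.castSucc)) :=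
  measurable_fst.comp (joint_mp (Measure.dirac 1) n).measurable

theorem gen_meas {Ω : Type*} [MeasurableSpace Ω] {W : Ω → SL2} {Y : Ω → PX}
    (hW : Measurable W) (hY : Measurable Y) (f : PX → ℝ) (hf : Continuous f) :
    Measurable (fun p => f (act (W p) (Y p))) :=
  Measurable.comp (g := fun p : SL2 × PX => f (act p.1 p.2)) (f := fun p => (W p, Y p))
    (measurable_uncurry_act f hf) (hW.prodMk hY)

theorem gen_int {Ω : Type*} [MeasurableSpace Ω] (m : Measure Ω) [IsFiniteMeasure m]
    {W V : Ω → SL2} {Y : Ω → PX} (hW : Measurable W) (hV : Measurable V)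
    (hY : Measurable Y) (f : PX → ℝ) (hf : Continuous f) (t : ℝ) :
    Integrable (fun p => (Ind t (W p) - Ind t (V p)) * f (act (W p) (Y p))) m := by
  obtain ⟨C, hC0, hC⟩ := exists_bound f hf
  have m1 : Measurable (fun p => Ind t (W p)) := (Ind_meas t).comp hW
  have m2 : Measurable (fun p => Ind t (V p)) := (Ind_meas t).comp hV
  refine integrable_of_bdd (C := 2 * C) ((m1.sub m2).mul (gen_meas hW hY f hf)) ?_
  intro p
  rw [abs_mul]
  have h1 := Ind_abs t (W p)
  have h2 := Ind_abs t (V p)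
  have h3 := abs_sub (Ind t (W p)) (Ind t (V p))
  exact mul_le_mul (by linarith) (hC _) (abs_nonneg _) (by norm_num)

theorem gen_diff {Ω : Type*} [MeasurableSpace Ω] (m : Measure Ω) [IsFiniteMeasure m]
    {W V : Ω → SL2} (hW : Measurable W) (hV : Measurable V)
    (x : PX) (f : PX → ℝ) (hf : Continuous f) (t : ℝ) :
    ∫ p, (Ind t (W p) - Ind t (V p)) * f (act (W p) x) ∂m =
      (∫ p in {p | kappa (V p) < t ∧ t ≤ kappa (W p)}, f (act (W p) x) ∂m) -
      ∫ p in {p | t ≤ kappa (V p) ∧ kappa (W p) < t}, f (act (W p) x) ∂m := by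
  obtain ⟨C, hC0, hC⟩ := exists_bound f hf
  have m1 : MeasurableSet {p | kappa (V p) < t ∧ t ≤ kappa (W p)} :=
    (measurableSet_lt (measurable_kappa.comp hV) measurable_const).inter
      (measurableSet_le measurable_const (measurable_kappa.comp hW))
  have m2 : MeasurableSet {p | t ≤ kappa (V p) ∧ kappa (W p) < t} :=
    (measurableSet_le measurable_const (measurable_kappa.comp hV)).inter
      (measurableSet_lt (measurable_kappa.comp hW) measurable_const)
  have mf : Integrable (fun p => f (act (W p) x)) m :=
    integrable_of_bdd (gen_meas hW measurable_const f hf) fun g => hC _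
  rw [← integral_indicator m1, ← integral_indicator m2,
    ← integral_sub (mf.indicator m1) (mf.indicator m2)]
  refine integral_congr_ae (Eventually.of_forall fun p => ?_)
  by_cases h1 : t ≤ kappa (W p) <;> by_cases h2 : t ≤ kappa (V p) <;>
    simp [Ind, Set.indicator, h1, h2, not_lt.mpr, not_le.mp, lt_of_not_ge]

theorem FF_int {f : PX → ℝ} (hf : Continuous f) (t : ℝ) (n : ℕ) :
    Integrable (fun p : PX × (Fin (n+1) → SL2) =>
      (Ind t (word p.2) - Ind t (word (p.2 ∘ Fin.castSucc))) * f (act (word p.2) p.1))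
      (ν.prod (μpi μ (n+1))) := by
  exact gen_int (ν.prod (μpi μ (n+1))) (W := fun p : PX × (Fin (n+1) → SL2) => word p.2)
    (V := fun p : PX × (Fin (n+1) → SL2) => word (p.2 ∘ Fin.castSucc))
    (Y := fun p : PX × (Fin (n+1) → SL2) => p.1)
    ((measurable_word (n+1)).comp measurable_snd) ((meas_cast_fun n).comp measurable_snd)
    measurable_fst f hf t

theorem FF_integral (hstat : IsMuStationary μ ν) {f : PX → ℝ} (hf : Continuous f) (t : ℝ) (n : ℕ) :
    ∫ x, FF μ f t n x ∂ν = cc μ ν f t (n+1) - cc μ ν f t n := by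
  obtain ⟨C, hC0, hC⟩ := exists_bound f hf
  have hFm := (Fh_cont ν hf).measurable
  unfold FF
  rw [integral_integral_swap (FF_int μ ν hf t n)]
  simp only [integral_const_mul]
  change ∫ g, (Ind t (word g) - Ind t (word (g ∘ Fin.castSucc))) * Fh ν f (word g) ∂(μpi μ (n+1)) = _
  simp only [sub_mul]
  have mI : Measurable (fun s => Ind t s * Fh ν f s) := (Ind_meas t).mul hFm
  have i1 : Integrable (fun g : Fin (n+1) → SL2 => Ind t (word g) * Fh ν f (word g)) (μpi μ (n+1)) :=
    integrable_of_bdd (mI.comp (measurable_word _)) fun g => Ind_mul_abs t _ (Fh_bdd ν hC _)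
  have i2 : Integrable (fun g : Fin (n+1) → SL2 => Ind t (word (g ∘ Fin.castSucc)) * Fh ν f (word g))
      (μpi μ (n+1)) :=
    integrable_of_bdd (((Ind_meas t).comp (meas_cast_fun n)).mul (hFm.comp (measurable_word _)))
      fun g => Ind_mul_abs t _ (Fh_bdd ν hC _)
  rw [integral_sub i1 i2]
  congr 1
  · rw [cc, law, integral_map (measurable_word _).aemeasurable mI.aestronglyMeasurable]
  · have := integral_joint μ n (Φ := fun p => Ind t p.1 * Fh ν f p.2)
      (((Ind_meas t).comp measurable_fst).mul (hFm.comp measurable_snd)) (C := C)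
      (fun p => Ind_mul_abs t _ (Fh_bdd ν hC _))
    rw [this]
    simp only [integral_const_mul, Fh_harm μ ν hstat hf]
    rfl

end

set_option maxHeartbeats 4000000 in
theorem stopping_time_identity
    (μ : Measure SL2) [IsProbabilityMeasure μ]
    (hmom : HasExpMoment μ) (hzd : ZariskiDense μ)
    (ν : Measure PX) [IsProbabilityMeasure ν] (hstat : IsMuStationary μ ν)
    (t : ℝ) (ht : 0 < t) (f : PX → ℝ) (hf : Continuous f) :
    (∀ x : PX, Summable (fun n : ℕ =>
      ∫ g in {g : Fin (n + 1) → SL2 |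
          kappa (word (g ∘ Fin.castSucc)) < t ∧ t ≤ kappa (word g)},
        f (act (word g) x) ∂(μpi μ (n + 1)))) ∧
    (∀ x : PX, Summable (fun n : ℕ =>
      ∫ g in {g : Fin (n + 1) → SL2 |
          t ≤ kappa (word (g ∘ Fin.castSucc)) ∧ kappa (word g) < t},
        f (act (word g) x) ∂(μpi μ (n + 1)))) ∧
    ∫ x, f x ∂ν =
      ∫ x,
        ((∑' n : ℕ, ∫ g in {g : Fin (n + 1) → SL2 |
            kappa (word (g ∘ Fin.castSucc)) < t ∧ t ≤ kappa (word g)},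
          f (act (word g) x) ∂(μpi μ (n + 1))) -
         (∑' n : ℕ, ∫ g in {g : Fin (n + 1) → SL2 |
            t ≤ kappa (word (g ∘ Fin.castSucc)) ∧ kappa (word g) < t},
          f (act (word g) x) ∂(μpi μ (n + 1)))) ∂ν := by
  obtain ⟨C, hC0, hC⟩ := exists_bound f hf
  have hs := law_small μ ν hstat hzd t
  have hs' : Summable (fun n => (law μ (n+1)).real {g | kappa g < t}) :=
    (summable_nat_add_iff 1).mpr hs
  have b1 : ∀ x : PX, ∀ n : ℕ, ‖∫ g in {g : Fin (n + 1) → SL2 |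
          kappa (word (g ∘ Fin.castSucc)) < t ∧ t ≤ kappa (word g)},
        f (act (word g) x) ∂(μpi μ (n + 1))‖ ≤ C * (law μ n).real {g | kappa g < t} := by
    intro x n
    refine (norm_setIntegral_le_of_norm_le_const (measure_lt_top _ _) (fun g _ => hC _)).trans ?_
    rw [← meas_cast μ n (measurableSet_klt t)]
    exact mul_le_mul_of_nonneg_left (measureReal_mono (fun g hg => hg.1)) hC0
  have b2 : ∀ x : PX, ∀ n : ℕ, ‖∫ g in {g : Fin (n + 1) → SL2 |
          t ≤ kappa (word (g ∘ Fin.castSucc)) ∧ kappa (word g) < t},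
        f (act (word g) x) ∂(μpi μ (n + 1))‖ ≤ C * (law μ (n+1)).real {g | kappa g < t} := by
    intro x n
    refine (norm_setIntegral_le_of_norm_le_const (measure_lt_top _ _) (fun g _ => hC _)).trans ?_
    rw [← meas_word μ (n+1) (measurableSet_klt t)]
    exact mul_le_mul_of_nonneg_left (measureReal_mono (fun g hg => hg.2)) hC0
  have s1 := fun x => Summable.of_norm_bounded (hs.mul_left C) (b1 x)
  have s2 := fun x => Summable.of_norm_bounded (hs'.mul_left C) (b2 x)
  refine ⟨s1, s2, ?_⟩
  have hFF : ∀ n x, FF μ f t n x = (∫ g in {g : Fin (n + 1) → SL2 |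
          kappa (word (g ∘ Fin.castSucc)) < t ∧ t ≤ kappa (word g)},
        f (act (word g) x) ∂(μpi μ (n + 1))) - ∫ g in {g : Fin (n + 1) → SL2 |
          t ≤ kappa (word (g ∘ Fin.castSucc)) ∧ kappa (word g) < t},
        f (act (word g) x) ∂(μpi μ (n + 1)) := by
    intro n x
    exact gen_diff (μpi μ (n+1)) (W := fun g : Fin (n + 1) → SL2 => word g)
      (V := fun g : Fin (n + 1) → SL2 => word (g ∘ Fin.castSucc))
      (measurable_word (n+1)) (meas_cast_fun n) x f hf t
  have hFb : ∀ n x, ‖FF μ f t n x‖ ≤ C * (law μ n).real {g | kappa g < t} +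
      C * (law μ (n+1)).real {g | kappa g < t} := fun n x => by
    rw [hFF]
    exact (norm_sub_le _ _).trans (add_le_add (b1 x n) (b2 x n))
  have hFi : ∀ n, Integrable (FF μ f t n) ν := fun n => (FF_int μ ν hf t n).integral_prod_left
  have hsum := hasSum_integral_of_summable_integral_norm hFi (by
    refine Summable.of_nonneg_of_le (fun n => integral_nonneg fun x => norm_nonneg _) (fun n => ?_)
      ((hs.mul_left C).add (hs'.mul_left C))
    have := abs_integral_le (m := ν) (f := fun x => ‖FF μ f t n x‖) (fun x => by
      rw [abs_norm]; exact hFb n x)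
    exact (le_abs_self _).trans this)
  have t1 := hsum.tendsto_sum_nat
  simp only [FF_integral μ ν hstat hf] at t1
  simp only [Finset.sum_range_sub (cc μ ν f t), cc_zero μ ν f ht, sub_zero] at t1
  rw [tendsto_nhds_unique (cc_tendsto μ ν hstat hzd hf t) t1]
  refine integral_congr_ae (Eventually.of_forall fun x => ?_)
  simp only [hFF]
  exact (s1 x).tsum_sub (s2 x)

end
end

section
/- For all real numbers b₁ < b₂ and every nonzero real λ, | ∫_{b₁}^{b₂} e^{i λ e^{−u}} du | ≤ 2 (e^{b₁} + e^{b₂}) / |λ|. -/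
open MeasureTheory Filter

noncomputable section

/-- ν is μ-stationary: μ ∗ ν = ν. -/
def IsStationaryMeasure (μ : Measure SL2) (ν : Measure PX) : Prop :=
  μ.bind (fun g => ν.map (act g)) = ν

theorem oscillatory_integral_bound (b₁ b₂ lam : ℝ) (h : b₁ < b₂) (hlam : lam ≠ 0) :
    ‖∫ u in b₁..b₂, Complex.exp (Complex.I * lam * (Real.exp (-u) : ℂ))‖ ≤
      2 * (Real.exp b₁ + Real.exp b₂) / |lam| := by
  set E : ℝ → ℂ := fun u => Complex.exp (Complex.I * lam * (Real.exp (-u) : ℂ)) with hE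
  have hnorm : ∀ u, ‖E u‖ = 1 := by
    intro u
    have : Complex.I * lam * (Real.exp (-u) : ℂ) = ((lam * Real.exp (-u) : ℝ) : ℂ) * Complex.I := by
      push_cast; ring
    simp only [hE]
    rw [this, Complex.norm_exp_ofReal_mul_I]
  have hEc : Continuous E := by
    simp only [hE]; fun_prop
  have hexpc : Continuous (fun u : ℝ => ((Real.exp u : ℝ) : ℂ)) := by fun_prop
  have hF : ∀ u : ℝ, HasDerivAt (fun u : ℝ => ((Real.exp u : ℝ) : ℂ) * E u)
      (((Real.exp u : ℝ) : ℂ) * E u - Complex.I * lam * E u) u := by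
    intro u
    have h1 : HasDerivAt (fun u : ℝ => ((Real.exp u : ℝ) : ℂ)) ((Real.exp u : ℝ) : ℂ) u :=
      (Real.hasDerivAt_exp u).ofReal_comp
    have h2 : HasDerivAt (fun u : ℝ => ((Real.exp (-u) : ℝ) : ℂ))
        ((Real.exp (-u) * (-1) : ℝ) : ℂ) u :=
      ((hasDerivAt_neg u).exp).ofReal_comp
    have h3 : HasDerivAt E (E u * (Complex.I * lam * ((Real.exp (-u) * (-1) : ℝ) : ℂ))) u :=
      (h2.const_mul (Complex.I * (lam : ℂ))).cexp
    have h4 := h1.mul h3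
    have h5 : ((Real.exp u : ℝ) : ℂ) * ((Real.exp (-u) : ℝ) : ℂ) = 1 := by
      rw [← Complex.ofReal_mul, ← Real.exp_add]; simp
    refine h4.congr_deriv ?_
    rw [Complex.ofReal_mul]
    push_cast at h5 ⊢
    linear_combination (-(Complex.I * lam * E u)) * h5
  have hI1 : IntervalIntegrable (fun u : ℝ => ((Real.exp u : ℝ) : ℂ) * E u) volume b₁ b₂ :=
    (hexpc.mul hEc).intervalIntegrable _ _
  have hI2 : IntervalIntegrable (fun u : ℝ => Complex.I * lam * E u) volume b₁ b₂ :=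
    (continuous_const.mul hEc).intervalIntegrable _ _
  have key := intervalIntegral.integral_eq_sub_of_hasDerivAt (fun u _ => hF u) (hI1.sub hI2)
  rw [intervalIntegral.integral_sub hI1 hI2, intervalIntegral.integral_const_mul] at key
  have hb : ‖∫ u in b₁..b₂, ((Real.exp u : ℝ) : ℂ) * E u‖ ≤ Real.exp b₂ - Real.exp b₁ := by
    rw [← integral_exp]
    refine intervalIntegral.norm_integral_le_of_norm_le h.le ?_
      (Real.continuous_exp.intervalIntegrable _ _)
    refine Eventually.of_forall fun u _ => ?_
    rw [norm_mul, hnorm, mul_one, Complex.norm_real, Real.norm_eq_abs, Real.abs_exp]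
  have hn : ∀ u : ℝ, ‖((Real.exp u : ℝ) : ℂ) * E u‖ = Real.exp u := by
    intro u
    rw [norm_mul, hnorm, mul_one, Complex.norm_real, Real.norm_eq_abs, Real.abs_exp]
  have key2 : Complex.I * lam * ∫ u in b₁..b₂, E u
      = (∫ u in b₁..b₂, ((Real.exp u : ℝ) : ℂ) * E u)
        - (((Real.exp b₂ : ℝ) : ℂ) * E b₂ - ((Real.exp b₁ : ℝ) : ℂ) * E b₁) := by
    linear_combination -key
  have key3 := congrArg norm key2
  rw [norm_mul, norm_mul, Complex.norm_I, one_mul, Complex.norm_real, Real.norm_eq_abs] at key3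
  have t1 := norm_sub_le (∫ u in b₁..b₂, ((Real.exp u : ℝ) : ℂ) * E u)
    (((Real.exp b₂ : ℝ) : ℂ) * E b₂ - ((Real.exp b₁ : ℝ) : ℂ) * E b₁)
  have t2 := norm_sub_le (((Real.exp b₂ : ℝ) : ℂ) * E b₂) (((Real.exp b₁ : ℝ) : ℂ) * E b₁)
  rw [hn, hn] at t2
  rw [le_div_iff₀ (abs_pos.mpr hlam), mul_comm, key3]
  have := Real.exp_pos b₁
  linarith

end
end
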